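/- Let u be quasi-definite with SMOP (P_n), let c ∈ ℂ with P_n(c) ≠ 0 for all n, and suppose the Christoffel transformation ũ = (x−c)u is quasi-definite with SMOP (P̃_n). Let P^{(1)}_{n−1}(x) = (1/u_0)⟨u_y,(P_n(x)−P_n(y))/(x−y)⟩ and P̃^{(1)}_{n−1}(x) = (1/ũ_0)⟨ũ_y,(P̃_n(x)−P̃_n(y))/(x−y)⟩ be the associated polynomials of the first kind of u and ũ, and define R_n(x) = (u_0/ũ_0)·[(x−c)·P^{(1)}_n(x) − P_{n+1}(x)]. Then for every n ≥ 1: (x−c)·P̃^{(1)}_{n−1}(x) = R_n(x) − (P_{n+1}(c)/P_n(c))·R_{n−1}(x). -/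

import Mathlib

open Polynomial

noncomputable section

/-- Apply a linear functional (identified with its moment sequence) to a polynomial:
`⟨u, p⟩ = Σ_k c_k u_k` for `p = Σ_k c_k x^k`. -/
def fapply (u : ℕ → ℂ) (p : Polynomial ℂ) : ℂ := p.sum fun k ck => ck * u k

/-- `P` is the sequence of monic orthogonal polynomials (SMOP) of the functional `u`. -/
def IsSMOP (u : ℕ → ℂ) (P : ℕ → Polynomial ℂ) : Prop :=
  (∀ n, (P n).Monic) ∧ (∀ n, (P n).natDegree = n) ∧
    (∀ n m, n ≠ m → fapply u (P n * P m) = 0) ∧ (∀ n, fapply u (P n * P n) ≠ 0)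

/-- A functional is quasi-definite iff it admits a SMOP. -/
def IsQuasiDefinite (u : ℕ → ℂ) : Prop := ∃ P, IsSMOP u P

/-- Three term recurrence relation `x P_n = P_{n+1} + b_n P_n + a_n P_{n-1}`,
with `P_{-1} = 0`, `P_0 = 1`. -/
def HasTTRR (P : ℕ → Polynomial ℂ) (a b : ℕ → ℂ) : Prop :=
  P 0 = 1 ∧ X * P 0 = P 1 + C (b 0) * P 0 ∧
    ∀ n, 1 ≤ n → X * P n = P (n + 1) + C (b n) * P n + C (a n) * P (n - 1)

/-- Wronskian `W(p,q)(x) = p(x) q'(x) - p'(x) q(x)`. -/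
def Wr (p q : Polynomial ℂ) (x : ℂ) : ℂ :=
  p.eval x * (derivative q).eval x - (derivative p).eval x * q.eval x

/-- The monic Jacobi matrix with diagonal `b`, superdiagonal `1` and subdiagonal
entries `J_{n+1,n} = a_{n+1}`. -/
def jacobi (a b : ℕ → ℂ) (i j : ℕ) : ℂ :=
  if i = j then b i else if j = i + 1 then 1 else if i = j + 1 then a i else 0

/-- Entrywise product of semi-infinite (banded) matrices; the sum has finite support. -/
def mprod (A B : ℕ → ℕ → ℂ) (i j : ℕ) : ℂ := ∑' k, A i k * B k j

/-- `w` is the moment sequence of the inverse functional `u⁻¹`: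
the convolution of the moments of `u` and `w` is `(1,0,0,…)`. -/
def IsInverseMoments (u w : ℕ → ℂ) : Prop :=
  ∀ n, ∑ k ∈ Finset.range (n + 1), u k * w (n - k) = if n = 0 then 1 else 0

/-- Apply a functional `u` to the second (outer) variable `y` of a bivariate polynomial
`D = Σ_k q_k(x) y^k`, giving `Σ_k u_k q_k(x)`. -/
def fapplyY (u : ℕ → ℂ) (D : Polynomial (Polynomial ℂ)) : Polynomial ℂ :=
  D.sum fun k q => u k • q

theorem fa_add (u : ℕ → ℂ) (p q : Polynomial ℂ) : fapply u (p + q) = fapply u p + fapply u q := by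
  unfold fapply
  exact sum_add_index p q _ (by simp) (by intros; ring)

theorem fa_C (u : ℕ → ℂ) (a : ℂ) (p : Polynomial ℂ) : fapply u (C a * p) = a * fapply u p := by
  unfold fapply
  rw [← smul_eq_C_mul, sum_smul_index _ _ _ (by simp), Polynomial.sum, Polynomial.sum,
    Finset.mul_sum]
  simp [mul_assoc]

theorem fa_sub (u : ℕ → ℂ) (p q : Polynomial ℂ) : fapply u (p - q) = fapply u p - fapply u q := by
  have : p - q = p + C (-1) * q := by simp [sub_eq_add_neg]
  rw [this, fa_add, fa_C]; ring

theorem fa_shift (u ut : ℕ → ℂ) (c : ℂ) (hut : ∀ n, ut n = u (n + 1) - c * u n)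
    (p : Polynomial ℂ) : fapply ut p = fapply u ((X - C c) * p) := by
  induction p using Polynomial.induction_on' with
  | add p q hp hq => rw [mul_add, fa_add, fa_add, hp, hq]
  | monomial n a =>
    rw [sub_mul, fa_sub, fa_C, X_mul_monomial]
    unfold fapply
    rw [sum_monomial_index _ _ (by simp), sum_monomial_index _ _ (by simp),
      sum_monomial_index _ _ (by simp), hut]
    ring

theorem fy_add (u : ℕ → ℂ) (p q : Polynomial (Polynomial ℂ)) :
    fapplyY u (p + q) = fapplyY u p + fapplyY u q := by
  unfold fapplyY
  exact sum_add_index p q _ (by simp) (by intros; simp)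

theorem fy_C (u : ℕ → ℂ) (a : Polynomial ℂ) (p : Polynomial (Polynomial ℂ)) :
    fapplyY u (C a * p) = a * fapplyY u p := by
  unfold fapplyY
  rw [← smul_eq_C_mul, sum_smul_index _ _ _ (by simp), Polynomial.sum, Polynomial.sum,
    Finset.mul_sum]
  simp

theorem fy_sub (u : ℕ → ℂ) (p q : Polynomial (Polynomial ℂ)) :
    fapplyY u (p - q) = fapplyY u p - fapplyY u q := by
  have : p - q = p + C (-1) * q := by rw [C_neg, C_1]; ring
  rw [this, fy_add, fy_C]; ring

theorem fy_shift (u ut : ℕ → ℂ) (c : ℂ) (hut : ∀ n, ut n = u (n + 1) - c * u n)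
    (p : Polynomial (Polynomial ℂ)) : fapplyY ut p = fapplyY u ((X - C (C c)) * p) := by
  induction p using Polynomial.induction_on' with
  | add p q hp hq => rw [mul_add, fy_add, fy_add, hp, hq]
  | monomial n a =>
    rw [sub_mul, fy_sub, fy_C, X_mul_monomial]
    unfold fapplyY
    rw [sum_monomial_index _ _ (by simp), sum_monomial_index _ _ (by simp),
      sum_monomial_index _ _ (by simp), hut]
    simp only [smul_eq_C_mul, C_sub, C_mul]
    ring

theorem deg_step (q r : Polynomial ℂ) (k : ℕ) (hq : q.degree < (k + 1 : ℕ)) (hr : r.Monic)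
    (hk : r.natDegree = k) : (q - C (q.coeff k) * r).degree < (k : ℕ) := by
  rw [degree_lt_iff_coeff_zero] at hq ⊢
  intro m hm
  rcases hm.eq_or_lt with h | h
  · subst h
    have : r.coeff k = 1 := by rw [← hk]; exact hr
    simp [this]
  · have : r.coeff m = 0 := coeff_eq_zero_of_natDegree_lt (by omega)
    simp [this, hq m h]

theorem smop_orth (v : ℕ → ℂ) (R : ℕ → Polynomial ℂ) (h : IsSMOP v R) (n : ℕ) :
    ∀ k ≤ n, ∀ q : Polynomial ℂ, q.degree < (k : ℕ) → fapply v (R n * q) = 0 := by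
  obtain ⟨h1, h2, h3, h4⟩ := h
  intro k
  induction k with
  | zero =>
    intro _ q hq
    have : q = 0 := by
      rw [degree_lt_iff_coeff_zero] at hq
      ext m; simp [hq m (Nat.zero_le _)]
    subst this
    simp [fapply]
  | succ k ih =>
    intro hk q hq
    have e : R n * q = C (q.coeff k) * (R n * R k) + R n * (q - C (q.coeff k) * R k) := by ring
    rw [e, fa_add, fa_C, h3 n k (by omega), ih (by omega) _ (deg_step q _ k hq (h1 k) (h2 k))]
    simp

theorem smop_zero (v : ℕ → ℂ) (R : ℕ → Polynomial ℂ) (h : IsSMOP v R) (n : ℕ)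
    (E : Polynomial ℂ) (hE : E.degree < (n : ℕ))
    (ho : ∀ q : Polynomial ℂ, q.degree < (n : ℕ) → fapply v (E * q) = 0) : E = 0 := by
  by_contra hne
  have hdeg := degree_eq_natDegree hne
  have hm : E.natDegree < n := by rw [hdeg] at hE; exact_mod_cast hE
  have h0 := smop_orth v R h E.natDegree
  obtain ⟨h1, h2, h3, h4⟩ := h
  set m := E.natDegree with hmdef
  have hR : (R m).degree = (m : ℕ) := by rw [degree_eq_natDegree (h1 m).ne_zero, h2]
  have a := ho (R m) (by rw [hR]; exact_mod_cast hm)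
  have e : E * R m = C (E.coeff m) * (R m * R m) + R m * (E - C (E.coeff m) * R m) := by ring
  rw [e, fa_add, fa_C, h0 m le_rfl _ (deg_step E _ m (by rw [hdeg]; exact_mod_cast Nat.lt_succ_self m)
    (h1 m) (h2 m)), add_zero] at a
  rcases mul_eq_zero.1 a with a | a
  · exact hne (leadingCoeff_eq_zero.1 a)
  · exact h4 m a

theorem connection (u : ℕ → ℂ) (c : ℂ) (P : ℕ → Polynomial ℂ) (hP : IsSMOP u P)
    (hc : ∀ n, (P n).eval c ≠ 0)
    (ut : ℕ → ℂ) (hut : ∀ n, ut n = u (n + 1) - c * u n)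
    (Pt : ℕ → Polynomial ℂ) (hPt : IsSMOP ut Pt) (n : ℕ) :
    (X - C c) * Pt n = P (n + 1) - C ((P (n + 1)).eval c / (P n).eval c) * P n := by
  set l := (P (n + 1)).eval c / (P n).eval c with hl
  have hroot : (P (n + 1) - C l * P n).IsRoot c := by
    have := hc n
    simp [IsRoot, hl, this]
  obtain ⟨T, hT⟩ := dvd_iff_isRoot.2 hroot
  have o1 := smop_orth u P hP (n + 1)
  have o2 := smop_orth u P hP n
  have o3 := smop_orth ut Pt hPt n
  have dP : ∀ k, (P k).degree = (k : ℕ) := fun k => by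
    rw [degree_eq_natDegree (hP.1 k).ne_zero, hP.2.1]
  have dlt : (C l * P n).degree < (P (n + 1)).degree := by
    refine (show (C l * P n).degree ≤ (P n).degree from by rw [← smul_eq_C_mul]; exact degree_smul_le l (P n)).trans_lt ?_
    rw [dP, dP]; exact_mod_cast Nat.lt_succ_self n
  have hSm : (P (n + 1) - C l * P n).Monic := (hP.1 (n + 1)).sub_of_left dlt
  have hSd : (P (n + 1) - C l * P n).natDegree = n + 1 := by
    rw [natDegree_eq_of_degree_eq (degree_sub_eq_left_of_degree_lt dlt), hP.2.1]
  have hTm : T.Monic := (monic_X_sub_C c).of_mul_monic_left (hT ▸ hSm)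
  have hTd : T.natDegree = n := by
    rw [hT, (monic_X_sub_C c).natDegree_mul hTm, natDegree_X_sub_C] at hSd
    omega
  have hE : T - Pt n = 0 := by
    apply smop_zero ut Pt hPt n
    · have := deg_step T (Pt n) n (by
        rw [degree_eq_natDegree hTm.ne_zero, hTd]; exact_mod_cast Nat.lt_succ_self n)
        (hPt.1 n) (hPt.2.1 n)
      have h1 : T.coeff n = 1 := by rw [← hTd]; exact hTm
      simpa [h1] using this
    · intro q hq
      rw [sub_mul, fa_sub, o3 n le_rfl q hq, fa_shift u ut c hut, ← mul_assoc, ← hT, sub_mul,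
        fa_sub, mul_assoc, fa_C, o2 n le_rfl q hq, o1 n (by omega) q hq]
      simp
  rw [hT, sub_eq_zero.1 hE]

/-- connection formula
`(x-c) P̃^{(1)}_{n-1}(x) = R_n(x) - (P_{n+1}(c)/P_n(c)) R_{n-1}(x)` for `n ≥ 1`, where
`R_n(x) = (u_0/ũ_0)[(x-c) P^{(1)}_n(x) - P_{n+1}(x)]` and the first-kind associated
polynomials are defined by applying the functional to the second variable of the divided
difference: `(x - y) D_n = P_n(x) - P_n(y)`, `P^{(1)}_{n-1} = (1/u_0)⟨u_y, D_n⟩`. -/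
theorem stmt_11 (u : ℕ → ℂ) (c : ℂ) (P : ℕ → Polynomial ℂ) (hP : IsSMOP u P)
    (hu0 : u 0 ≠ 0) (hc : ∀ n, (P n).eval c ≠ 0)
    (ut : ℕ → ℂ) (hut : ∀ n, ut n = u (n + 1) - c * u n) (hut0 : ut 0 ≠ 0)
    (Pt : ℕ → Polynomial ℂ) (hPt : IsSMOP ut Pt)
    (D : ℕ → Polynomial (Polynomial ℂ))
    (hD : ∀ n, 1 ≤ n →
      (Polynomial.C Polynomial.X - Polynomial.X) * D n
        = Polynomial.C (P n) - (P n).map Polynomial.C)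
    (Dt : ℕ → Polynomial (Polynomial ℂ))
    (hDt : ∀ n, 1 ≤ n →
      (Polynomial.C Polynomial.X - Polynomial.X) * Dt n
        = Polynomial.C (Pt n) - (Pt n).map Polynomial.C)
    (R : ℕ → Polynomial ℂ)
    (hR : ∀ n, R n = C (u 0 / ut 0)
      * ((X - C c) * ((u 0)⁻¹ • fapplyY u (D (n + 1))) - P (n + 1))) :
    ∀ n, 1 ≤ n →
      (X - C c) * ((ut 0)⁻¹ • fapplyY ut (Dt n))
        = R n - C ((P (n + 1)).eval c / (P n).eval c) * R (n - 1) := by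
  intro n hn
  have hcon := connection u c P hP hc ut hut Pt hPt n
  set l := (P (n + 1)).eval c / (P n).eval c with hl
  have hne : (C X - X : Polynomial (Polynomial ℂ)) ≠ 0 := by
    rw [← neg_sub, neg_ne_zero]; exact X_sub_C_ne_zero _
  have hmap := congrArg (Polynomial.map (C : ℂ →+* Polynomial ℂ)) hcon
  have hCC := congrArg (C : Polynomial ℂ →+* Polynomial (Polynomial ℂ)) hcon
  simp only [Polynomial.map_mul, Polynomial.map_sub, map_X, map_C, C_mul, C_sub] at hmap hCC
  have key : (X - C (C c)) * Dt n = D (n + 1) - C (C l) * D n - C (Pt n) * 1 := by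
    apply mul_left_cancel₀ hne
    have a := hD (n + 1) (by omega)
    have b := hD n hn
    have d := hDt n hn
    linear_combination (X - C (C c)) * d - a + C (C l) * b + hCC - hmap
  have h1 : fapplyY u 1 = C (u 0) := by
    unfold fapplyY
    rw [← C_1, sum_C_index (by simp), smul_eq_C_mul, mul_one]
  have hf := congrArg (fapplyY u) key
  rw [← fy_shift u ut c hut, fy_sub, fy_sub, fy_C, fy_C, h1] at hf
  obtain ⟨m, rfl⟩ : ∃ m, n = m + 1 := ⟨n - 1, by omega⟩
  rw [hR, hR, hf]
  simp only [Nat.add_sub_cancel, smul_eq_C_mul]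
  have e1 : (C (u 0 / ut 0) : Polynomial ℂ) = C (u 0) * C (ut 0)⁻¹ := by
    rw [← C_mul, div_eq_mul_inv]
  have e2 : (C (u 0) : Polynomial ℂ) * C (u 0)⁻¹ = 1 := by
    rw [← C_mul, mul_inv_cancel₀ hu0, C_1]
  rw [e1]
  linear_combination (-C (u 0) * C (ut 0)⁻¹) * hcon - ((X - C c) * C (ut 0)⁻¹ * (fapplyY u (D (m + 1 + 1)) - C l * fapplyY u (D (m + 1)))) * e2
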